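/- Let M be a Hermitian positive definite block matrix partitioned by index sets F and C, and let Z be an invertible Hermitian operator on the F-block satisfying 0 ⪯ Z⁻¹ - M_{F,F} ⪯ ε · Schur(M, C), where Schur(M,C) = M_{F,F} - M_{F,C} M_{C,C}⁻¹ M_{C,F}. Then M ⪯ [[Z⁻¹, M_{F,C}], [M_{C,F}, M_{C,C}]] ⪯ (1+ε) M. -/

import Mathlib

/-!
Write `N` for `M` with `M_FF` replaced by `Z⁻¹`. Only the `F, F` block changes, so
`N - M = diag(D, 0)` with `D = Z⁻¹ - M_FF ⪰ 0`. For the upper bound, block elimination of `C` writes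
`M = diag(S, 0) + [M_FC M_CC⁻¹; 1] M_CC [M_FC M_CC⁻¹; 1]ᴴ` with `S = Schur(M, C)`, hence
`(1 + ε) M - N = diag(ε S - D, 0) + ε [M_FC M_CC⁻¹; 1] M_CC [M_FC M_CC⁻¹; 1]ᴴ`,
a sum of two positive semidefinite matrices.
-/

open Matrix
open scoped ComplexOrder

theorem posSemidef_fromBlocks_zero {F C : Type*} [Fintype F] [DecidableEq F] [Fintype C]
    {D : Matrix F F ℂ} (hD : D.PosSemidef) :
    (Matrix.fromBlocks D 0 0 (0 : Matrix C C ℂ)).PosSemidef := by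
  have h := hD.mul_mul_conjTranspose_same (Matrix.fromRows (1 : Matrix F F ℂ) (0 : Matrix C F ℂ))
  convert h using 1
  ext (_ | _) (_ | _) <;>
    simp [Matrix.fromRows_mul, Matrix.conjTranspose_fromRows_eq_fromCols_conjTranspose]

/-- The part of a Hermitian block matrix left after subtracting its Schur complement is `W A Wᴴ`
with `W = [B A⁻¹; 1]`, so it inherits positivity from `A`. -/
theorem posSemidef_fromBlocks_mul_inv_mul {F C : Type*} [Fintype F] [Fintype C] [DecidableEq C]
    (B : Matrix F C ℂ) {A : Matrix C C ℂ} (hA : A.PosSemidef) (hu : IsUnit A) :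
    (Matrix.fromBlocks (B * A⁻¹ * Bᴴ) B Bᴴ A).PosSemidef := by
  have hd := (Matrix.isUnit_iff_isUnit_det A).1 hu
  have h := hA.mul_mul_conjTranspose_same (Matrix.fromRows (B * A⁻¹) (1 : Matrix C C ℂ))
  simpa [Matrix.fromRows_mul, Matrix.conjTranspose_fromRows_eq_fromCols_conjTranspose,
    Matrix.fromRows_mul_fromCols, Matrix.conjTranspose_nonsing_inv, hA.isHermitian.eq,
    Matrix.mul_assoc, Matrix.nonsing_inv_mul _ hd, Matrix.mul_nonsing_inv_cancel_left _ _ hd]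
    using h

/-- If `M` is Hermitian positive definite with blocks indexed by `F` and `C`, and `Z` is an
invertible Hermitian operator with `0 ⪯ Z⁻¹ - M_FF ⪯ ε · Schur(M, C)`, then replacing
`M_FF` by `Z⁻¹` gives a matrix between `M` and `(1+ε) M`. -/
theorem stmt_12 {F C : Type*} [Fintype F] [DecidableEq F] [Fintype C] [DecidableEq C]
    (MFF : Matrix F F ℂ) (MFC : Matrix F C ℂ) (MCF : Matrix C F ℂ) (MCC : Matrix C C ℂ)
    (Z : Matrix F F ℂ)
    (hM : (Matrix.fromBlocks MFF MFC MCF MCC).PosDef)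
    (hFF : IsUnit MFF) (hCC : IsUnit MCC)
    (hZ : Z.IsHermitian) (hZu : IsUnit Z)
    (ε : ℝ) (hε : 0 < ε)
    (h1 : (Z⁻¹ - MFF).PosSemidef)
    (h2 : (ε • (MFF - MFC * MCC⁻¹ * MCF) - (Z⁻¹ - MFF)).PosSemidef) :
    (Matrix.fromBlocks Z⁻¹ MFC MCF MCC - Matrix.fromBlocks MFF MFC MCF MCC).PosSemidef ∧
    ((1 + ε) • Matrix.fromBlocks MFF MFC MCF MCC -
        Matrix.fromBlocks Z⁻¹ MFC MCF MCC).PosSemidef := by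
  obtain ⟨-, hB, -, -⟩ := Matrix.isHermitian_fromBlocks_iff.1 hM.isHermitian
  have hA : MCC.PosSemidef := hM.posSemidef.submatrix Sum.inr
  subst hB
  constructor
  · simpa [sub_eq_add_neg, Matrix.fromBlocks_neg, Matrix.fromBlocks_add] using
      posSemidef_fromBlocks_zero (C := C) h1
  · have key := (posSemidef_fromBlocks_zero (C := C) h2).add
      ((posSemidef_fromBlocks_mul_inv_mul MFC hA hCC).smul hε.le)
    convert key using 1
    simp only [sub_eq_add_neg, Matrix.fromBlocks_neg, Matrix.fromBlocks_add,
      Matrix.fromBlocks_smul, Matrix.fromBlocks_inj]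
    refine ⟨?_, ?_, ?_, ?_⟩ <;> module
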